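/- Let ℓ ∈ 𝕃, ν ∈ (0,1], suppose the maximum margin γ := max_{‖λ‖₁=1} min_i (−(Aλ)_i) is positive, and let {λ_t} be boosting iterates whose steps satisfy α_qub_i ≤ α_i ≤ α_opt_i for every i ≥ 1 (where α_qub_i := ν·γ_i/C_i⁴ and α_opt_i := ν times a minimizer of α ↦ L(A(λ_{i−1}+α·v_i))). Then every γ_i satisfies γ_i ≥ γ, and for every t ≥ 0: L(Aλ_t) ≤ ℓ(0)·exp(−t·ν(2−ν)·γ²/(2C₁⁶)). In particular, for any ε ∈ (0, ℓ(0)), if t ≥ (2C₁⁶/(ν(2−ν)γ²))·ln(ℓ(0)/ε), then L(Aλ_t) ≤ ε. -/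

import Mathlib

/-!
Restrict the risk to the line through `Aλ_{t-1}` in the direction `A v_t`. On the sublevel set of
`L(Aλ_{t-1})` the loss and its first two derivatives agree with `exp` up to the factor `C_t`, hence
with one another up to `C_t²`. The risk along the line therefore has second derivative at most
`C_t⁴ ‖∇L‖₁`, and the step `ν γ_t / C_t⁴` multiplies the risk by at most
`1 - ν (2 - ν) γ_t² / (2 C_t⁶)`. By convexity, lengthening the step up to the line-search optimum
only helps. Duality between `‖·‖₁` and `‖·‖_∞` gives `γ ≤ γ_t`, and monotonicity of the risk gives
`C_t ≤ C₁`, so the factors are uniformly bounded away from `1`.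
-/

open Real Finset

noncomputable section

/-- The property that `C` is a valid curvature constant at level `z`:
`C ≥ 1` and `C⁻¹ ≤ eˣ / ℓ⁽ⁱ⁾(x) ≤ C` for all `x ≤ z` and `i ∈ {0,1,2}`. -/
def CBound (ℓ : ℝ → ℝ) (z C : ℝ) : Prop :=
  1 ≤ C ∧ ∀ x ≤ z, ∀ i ≤ 2,
    C⁻¹ ≤ Real.exp x / iteratedDeriv i ℓ x ∧ Real.exp x / iteratedDeriv i ℓ x ≤ C

/-- `C_ℓ(z)`: the least valid curvature constant at level `z`. -/
def Cconst (ℓ : ℝ → ℝ) (z : ℝ) : ℝ := sInf {C : ℝ | CBound ℓ z C}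

/-- Membership in the class `𝕃`: positive, twice continuously differentiable,
strictly convex, and `C_ℓ(z) < ∞` (i.e. some valid constant exists) for every `z`. -/
def MemL (ℓ : ℝ → ℝ) : Prop :=
  (∀ x, 0 < ℓ x) ∧ ContDiff ℝ 2 ℓ ∧ StrictConvexOn ℝ Set.univ ℓ ∧
    ∀ z : ℝ, ∃ C : ℝ, CBound ℓ z C

/-- Membership in `𝕃_∞`: in `𝕃` and moreover `C_ℓ(z) → 1` as `z → −∞`. -/
def MemLinf (ℓ : ℝ → ℝ) : Prop :=
  MemL ℓ ∧ Filter.Tendsto (Cconst ℓ) Filter.atBot (nhds 1)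

variable {m n : ℕ}

/-- The empirical risk `L(Aλ) = (1/m) Σᵢ ℓ((Aλ)ᵢ)`. -/
def LL (ℓ : ℝ → ℝ) (A : Matrix (Fin m) (Fin n) ℝ) (lam : Fin n → ℝ) : ℝ :=
  (∑ i, ℓ (A.mulVec lam i)) / m

/-- The gradient vector `∇L(Aλ)`, with `i`-th entry `ℓ'((Aλ)ᵢ)/m`. -/
def gradL (ℓ : ℝ → ℝ) (A : Matrix (Fin m) (Fin n) ℝ) (lam : Fin n → ℝ) : Fin m → ℝ :=
  fun i => deriv ℓ (A.mulVec lam i) / m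

/-- `‖Aᵀ ∇L(Aλ)‖_∞`. -/
def gInf (ℓ : ℝ → ℝ) (A : Matrix (Fin m) (Fin n) ℝ) (lam : Fin n → ℝ) : ℝ :=
  ⨆ j : Fin n, |∑ i, gradL ℓ A lam i * A i j|

/-- `‖∇L(Aλ)‖₁`. -/
def gOne (ℓ : ℝ → ℝ) (A : Matrix (Fin m) (Fin n) ℝ) (lam : Fin n → ℝ) : ℝ :=
  ∑ i, |gradL ℓ A lam i|

/-- `γ̂ = ‖Aᵀ∇L(Aλ)‖_∞ / ‖∇L(Aλ)‖₁`. -/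
def gammaHat (ℓ : ℝ → ℝ) (A : Matrix (Fin m) (Fin n) ℝ) (lam : Fin n → ℝ) : ℝ :=
  gInf ℓ A lam / gOne ℓ A lam

/-- `C = C_ℓ(ℓ⁻¹(m · L(Aλ)))`. -/
def Cstep (ℓ : ℝ → ℝ) (A : Matrix (Fin m) (Fin n) ℝ) (lam : Fin n → ℝ) : ℝ :=
  Cconst ℓ (Function.invFun ℓ ((m : ℝ) * LL ℓ A lam))

/-- The (minimum `l¹`) margin `M(Aλ) = min_k (−(Aλ)_k) / ‖λ‖₁`. -/
def margin (A : Matrix (Fin m) (Fin n) ℝ) (lam : Fin n → ℝ) : ℝ :=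
  ⨅ k : Fin m, (-(A.mulVec lam k)) / (∑ j, |lam j|)

/-- The maximum margin `γ = max_{‖λ‖₁=1} min_i (−(Aλ)ᵢ)`. -/
def gammaMax (A : Matrix (Fin m) (Fin n) ℝ) : ℝ :=
  sSup {r : ℝ | ∃ lam : Fin n → ℝ, (∑ j, |lam j|) = 1 ∧ r = ⨅ i : Fin m, -(A.mulVec lam i)}

/-- Boosting iterates: `λ₀ = 0`, `λ_t = λ_{t-1} + α_t • v_t` where `v_t` is a signed
standard basis vector satisfying `∇L(Aλ_{t-1})ᵀ A v_t = −‖Aᵀ∇L(Aλ_{t-1})‖_∞`. -/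
def IsBoostSeq (ℓ : ℝ → ℝ) (A : Matrix (Fin m) (Fin n) ℝ)
    (lam : ℕ → Fin n → ℝ) (α : ℕ → ℝ) (v : ℕ → Fin n → ℝ) : Prop :=
  lam 0 = 0 ∧
  (∀ t : ℕ, 1 ≤ t → lam t = lam (t-1) + α t • v t) ∧
  (∀ t : ℕ, 1 ≤ t → ∃ s : ℝ, (s = 1 ∨ s = -1) ∧ ∃ j : Fin n, v t = s • (Pi.single j (1:ℝ) : Fin n → ℝ)) ∧
  (∀ t : ℕ, 1 ≤ t →
    ∑ i, gradL ℓ A (lam (t-1)) i * A.mulVec (v t) i = - gInf ℓ A (lam (t-1)))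

/-- The quantity `Υ_ν(γ)`. -/
def Upsilon (ν γ : ℝ) : ℝ :=
  ((2/ν) * Real.log 2 - (2/ν) * Real.log ((1+γ) ^ (1-ν) + (1-γ) ^ (1-ν))
      - Real.log (1-γ^2)) /
    (Real.log (1+γ) - Real.log (1-γ))

section Calculus

lemma le_add_mul_add_sq_of_hasDerivAt2_le {f f' f'' : ℝ → ℝ} {a b K : ℝ} (hab : a ≤ b)
    (hf : ∀ x ∈ Set.Icc a b, HasDerivAt f (f' x) x)
    (hf' : ∀ x ∈ Set.Icc a b, HasDerivAt f' (f'' x) x)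
    (hK : ∀ x ∈ Set.Icc a b, f'' x ≤ K) :
    f b ≤ f a + f' a * (b - a) + K * (b - a) ^ 2 / 2 := by
  rcases hab.eq_or_lt with rfl | hlt
  · simp
  have hg : ∀ x ∈ Set.Icc a b,
      HasDerivAt (fun x => K / 2 * (x - a) ^ 2 - f x) (K * (x - a) - f' x) x := fun x hx => by
    have hsq := (((hasDerivAt_id x).sub_const a).pow 2).const_mul (K / 2)
    refine (hsq.sub (hf x hx)).congr_deriv ?_
    simp only [id, Nat.cast_ofNat]
    ring
  have hg' : ∀ x ∈ Set.Icc a b,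
      HasDerivAt (fun x => K * (x - a) - f' x) (K - f'' x) x := fun x hx => by
    have hlin := ((hasDerivAt_id x).sub_const a).const_mul K
    exact (hlin.sub (hf' x hx)).congr_deriv (by rw [mul_one])
  have hconv : ConvexOn ℝ (Set.Icc a b) (fun x => K / 2 * (x - a) ^ 2 - f x) :=
    convexOn_of_hasDerivWithinAt2_nonneg (convex_Icc a b)
      (fun x hx => (hg x hx).continuousAt.continuousWithinAt)
      (fun x hx => (hg x (interior_subset hx)).hasDerivWithinAt)
      (fun x hx => (hg' x (interior_subset hx)).hasDerivWithinAt)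
      (fun x hx => sub_nonneg.2 (hK x (interior_subset hx)))
  have htangent := hconv.le_slope_of_hasDerivAt (Set.left_mem_Icc.2 hab) (Set.right_mem_Icc.2 hab)
    hlt (hg a (Set.left_mem_Icc.2 hab))
  rw [slope_def_field, le_div_iff₀ (sub_pos.2 hlt)] at htangent
  linarith

lemma antitoneOn_Iic_of_convexOn_of_forall_le {f : ℝ → ℝ} {s : ℝ}
    (hf : ConvexOn ℝ Set.univ f) (hs : ∀ x, f s ≤ f x) : AntitoneOn f (Set.Iic s) := by
  intro u _ w hw huw
  simpa [hs u] using
    hf.le_max_of_mem_Icc (Set.mem_univ u) (Set.mem_univ s) ⟨huw, hw⟩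

lemma le_mul_exp_of_forall_succ_le_mul_one_sub {u : ℕ → ℝ} {κ : ℝ} (hu : ∀ t, 0 ≤ u t)
    (hstep : ∀ t, u (t + 1) ≤ u t * (1 - κ)) (t : ℕ) : u t ≤ u 0 * exp (-(t * κ)) := by
  have hgeom : u t ≤ exp (-κ) ^ t * u 0 := le_geom (exp_pos _).le t fun k _ =>
    calc u (k + 1) ≤ u k * (1 - κ) := hstep k
      _ ≤ u k * exp (-κ) := mul_le_mul_of_nonneg_left (one_sub_le_exp_neg κ) (hu k)
      _ = exp (-κ) * u k := mul_comm _ _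
  rwa [← exp_nat_mul, mul_neg, mul_comm] at hgeom

lemma mul_exp_neg_le_of_log_div_le {a ε r : ℝ} (ha : 0 < a) (hε : 0 < ε)
    (hr : log (a / ε) ≤ r) : a * exp (-r) ≤ ε := by
  rw [log_le_iff_le_exp (div_pos ha hε), div_le_iff₀ hε] at hr
  rwa [exp_neg, ← div_eq_mul_inv, div_le_iff₀' (exp_pos r)]

lemma le_of_le_mul_of_le_one {ν a s : ℝ} (hν : ν ∈ Set.Ioc (0 : ℝ) 1) (ha : 0 ≤ a)
    (has : a ≤ ν * s) : a ≤ s :=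
  has.trans (mul_le_of_le_one_left (nonneg_of_mul_nonneg_right (ha.trans has) hν.1) hν.2)

end Calculus

namespace CBound

variable {ℓ : ℝ → ℝ} {z w C x : ℝ} {i j : ℕ}

lemma const_pos (h : CBound ℓ z C) : 0 < C := one_pos.trans_le h.1

lemma mono (h : CBound ℓ w C) (hzw : z ≤ w) : CBound ℓ z C :=
  ⟨h.1, fun x hx => h.2 x (hx.trans hzw)⟩

lemma exp_div_pos (h : CBound ℓ z C) (hx : x ≤ z) (hi : i ≤ 2) :
    0 < exp x / iteratedDeriv i ℓ x :=
  (inv_pos.2 h.const_pos).trans_le (h.2 x hx i hi).1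

lemma iteratedDeriv_pos (h : CBound ℓ z C) (hx : x ≤ z) (hi : i ≤ 2) :
    0 < iteratedDeriv i ℓ x :=
  (div_pos_iff_of_pos_left (exp_pos x)).1 (h.exp_div_pos hx hi)

lemma exp_le_mul_iteratedDeriv (h : CBound ℓ z C) (hx : x ≤ z) (hi : i ≤ 2) :
    exp x ≤ C * iteratedDeriv i ℓ x :=
  (div_le_iff₀ (h.iteratedDeriv_pos hx hi)).1 (h.2 x hx i hi).2

lemma iteratedDeriv_le_mul_exp (h : CBound ℓ z C) (hx : x ≤ z) (hi : i ≤ 2) :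
    iteratedDeriv i ℓ x ≤ C * exp x :=
  (inv_mul_le_iff₀ h.const_pos).1 <|
    (le_div_iff₀ (h.iteratedDeriv_pos hx hi)).1 (h.2 x hx i hi).1

lemma iteratedDeriv_le_sq_mul_iteratedDeriv (h : CBound ℓ z C) (hx : x ≤ z) (hi : i ≤ 2)
    (hj : j ≤ 2) : iteratedDeriv i ℓ x ≤ C ^ 2 * iteratedDeriv j ℓ x :=
  calc iteratedDeriv i ℓ x ≤ C * exp x := h.iteratedDeriv_le_mul_exp hx hi
    _ ≤ C * (C * iteratedDeriv j ℓ x) :=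
      mul_le_mul_of_nonneg_left (h.exp_le_mul_iteratedDeriv hx hj) h.const_pos.le
    _ = C ^ 2 * iteratedDeriv j ℓ x := by ring

end CBound

section LeastConstant

variable {ℓ : ℝ → ℝ} {z w : ℝ}

lemma cBound_Cconst (h : ∃ C, CBound ℓ z C) : CBound ℓ z (Cconst ℓ z) := by
  refine ⟨le_csInf h fun C hC => hC.1, fun x hx i hi => ?_⟩
  have hratio : 0 < exp x / iteratedDeriv i ℓ x := h.elim fun C hC => hC.exp_div_pos hx hi
  have hinv_le : (exp x / iteratedDeriv i ℓ x)⁻¹ ≤ Cconst ℓ z :=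
    le_csInf h fun C hC => (inv_le_comm₀ hC.const_pos hratio).1 (hC.2 x hx i hi).1
  exact ⟨inv_le_of_inv_le₀ hratio hinv_le, le_csInf h fun C hC => (hC.2 x hx i hi).2⟩

lemma Cconst_le_Cconst (h : ∃ C, CBound ℓ w C) (hzw : z ≤ w) : Cconst ℓ z ≤ Cconst ℓ w :=
  csInf_le ⟨1, fun _ hC => hC.1⟩ ((cBound_Cconst h).mono hzw)

end LeastConstant

/-- An exponential-like loss: on every half-line `(-∞, z]` the loss and its first two derivatives
agree with `exp` up to a constant factor. Every loss in `𝕃` has this property; positivity,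
differentiability and convexity follow from it, because a `deriv` that is bounded away from `0` is
not a junk value. -/
def ExpLike (ℓ : ℝ → ℝ) : Prop := ∀ z : ℝ, ∃ C : ℝ, CBound ℓ z C

lemma MemL.expLike {ℓ : ℝ → ℝ} (hℓ : MemL ℓ) : ExpLike ℓ := hℓ.2.2.2

namespace ExpLike

variable {ℓ : ℝ → ℝ} {i : ℕ}

lemma iteratedDeriv_pos (hℓ : ExpLike ℓ) (hi : i ≤ 2) (x : ℝ) : 0 < iteratedDeriv i ℓ x :=
  (hℓ x).elim fun _ hC => hC.iteratedDeriv_pos le_rfl hi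

lemma pos (hℓ : ExpLike ℓ) (x : ℝ) : 0 < ℓ x := by
  simpa using hℓ.iteratedDeriv_pos zero_le_two x

lemma deriv_pos (hℓ : ExpLike ℓ) (x : ℝ) : 0 < deriv ℓ x := by
  simpa using hℓ.iteratedDeriv_pos one_le_two x

lemma hasDerivAt_iteratedDeriv (hℓ : ExpLike ℓ) (hi : i < 2) (x : ℝ) :
    HasDerivAt (iteratedDeriv i ℓ) (iteratedDeriv (i + 1) ℓ x) x := by
  have hpos := hℓ.iteratedDeriv_pos (Nat.succ_le_of_lt hi) x
  rw [iteratedDeriv_succ] at hpos ⊢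
  exact (differentiableAt_of_deriv_ne_zero hpos.ne').hasDerivAt

lemma hasDerivAt (hℓ : ExpLike ℓ) (x : ℝ) : HasDerivAt ℓ (deriv ℓ x) x := by
  simpa using hℓ.hasDerivAt_iteratedDeriv two_pos x

lemma strictMono (hℓ : ExpLike ℓ) : StrictMono ℓ := strictMono_of_deriv_pos hℓ.deriv_pos

lemma convexOn (hℓ : ExpLike ℓ) : ConvexOn ℝ Set.univ ℓ := by
  refine convexOn_of_hasDerivWithinAt2_nonneg (f' := deriv ℓ) (f'' := iteratedDeriv 2 ℓ) convex_univ
    (fun x _ => (hℓ.hasDerivAt x).continuousAt.continuousWithinAt)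
    (fun x _ => (hℓ.hasDerivAt x).hasDerivWithinAt) (fun x _ => ?_)
    (fun x _ => (hℓ.iteratedDeriv_pos le_rfl x).le)
  simpa using hℓ.hasDerivAt_iteratedDeriv one_lt_two x

lemma tendsto_atBot (hℓ : ExpLike ℓ) : Filter.Tendsto ℓ Filter.atBot (nhds 0) := by
  obtain ⟨C, hC⟩ := hℓ 0
  have hexp : Filter.Tendsto (fun x => C * exp x) Filter.atBot (nhds 0) := by
    simpa using tendsto_exp_atBot.const_mul C
  refine squeeze_zero' (.of_forall fun x => (hℓ.pos x).le) ?_ hexp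
  filter_upwards [Filter.eventually_le_atBot 0] with x hx
  simpa using hC.iteratedDeriv_le_mul_exp hx zero_le_two

lemma tendsto_atTop (hℓ : ExpLike ℓ) : Filter.Tendsto ℓ Filter.atTop Filter.atTop := by
  refine Filter.tendsto_atTop_mono' _ ?_ (Filter.tendsto_id.const_mul_atTop (hℓ.deriv_pos 0))
  filter_upwards [Filter.eventually_gt_atTop 0] with x hx
  have htangent := hℓ.convexOn.le_slope_of_hasDerivAt (Set.mem_univ 0) (Set.mem_univ x) hx
    (hℓ.hasDerivAt 0)
  rw [slope_def_field, sub_zero, le_div_iff₀ hx] at htangent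
  exact htangent.trans (sub_le_self _ (hℓ.pos 0).le)

lemma apply_invFun (hℓ : ExpLike ℓ) {y : ℝ} (hy : 0 < y) : ℓ (Function.invFun ℓ y) = y := by
  refine Function.invFun_eq (mem_range_of_exists_le_of_exists_ge
    (continuous_iff_continuousAt.2 fun x => (hℓ.hasDerivAt x).continuousAt) ?_ ?_)
  · exact (hℓ.tendsto_atBot.eventually_le_const hy).exists
  · exact (hℓ.tendsto_atTop.eventually_ge_atTop y).exists

end ExpLike

/-- The `k`-th derivative at `α` of the unnormalised risk `α ↦ ∑ᵢ ℓ(xᵢ + α bᵢ)` along the line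
through `x` with direction `b`; the case `k = 0` is this risk itself. -/
def lineRisk {ι : Type*} [Fintype ι] (ℓ : ℝ → ℝ) (x b : ι → ℝ) (k : ℕ) (α : ℝ) : ℝ :=
  ∑ i, iteratedDeriv k ℓ (x i + α * b i) * b i ^ k

/-- The fraction of the risk guaranteed to be removed by a step of length between `ν γ / C⁴` and the
line-search optimum, when the edge is `γ` and the curvature constant is `C`. -/
def descentRate (ν γ C : ℝ) : ℝ := ν * (2 - ν) * γ ^ 2 / (2 * C ^ 6)

lemma descentRate_nonneg {ν γ C : ℝ} (hν : ν ∈ Set.Ioo (0 : ℝ) 2) : 0 ≤ descentRate ν γ C := by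
  have h2ν : 0 < 2 - ν := sub_pos.2 hν.2
  have hν0 := hν.1
  unfold descentRate
  positivity

lemma descentRate_pos {ν γ C : ℝ} (hν : ν ∈ Set.Ioo (0 : ℝ) 2) (hγ : 0 < γ) (hC : 0 < C) :
    0 < descentRate ν γ C := by
  have h2ν : 0 < 2 - ν := sub_pos.2 hν.2
  have hν0 := hν.1
  unfold descentRate
  positivity

lemma descentRate_le_descentRate {ν γ γ' C C' : ℝ} (hν : ν ∈ Set.Ioo (0 : ℝ) 2) (hγ : 0 ≤ γ)
    (hγγ' : γ ≤ γ') (hC : 0 < C) (hCC' : C ≤ C') : descentRate ν γ C' ≤ descentRate ν γ' C := by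
  have h2ν : 0 < 2 - ν := sub_pos.2 hν.2
  have hν0 := hν.1
  unfold descentRate
  gcongr

section LineRisk

variable {ι : Type*} [Fintype ι] {ℓ : ℝ → ℝ} {x b : ι → ℝ} {z C : ℝ}

lemma lineRisk_zero_zero : lineRisk ℓ x b 0 0 = ∑ i, ℓ (x i) := by
  simp [lineRisk]

lemma lineRisk_one_zero : lineRisk ℓ x b 1 0 = ∑ i, deriv ℓ (x i) * b i := by
  simp [lineRisk]

namespace ExpLike

lemma hasDerivAt_lineRisk (hℓ : ExpLike ℓ) {k : ℕ} (hk : k < 2) (β : ℝ) :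
    HasDerivAt (lineRisk ℓ x b k) (lineRisk ℓ x b (k + 1) β) β := by
  refine HasDerivAt.fun_sum fun i _ => ?_
  have hline : HasDerivAt (fun α => x i + α * b i) (b i) β := by
    simpa using ((hasDerivAt_id β).mul_const (b i)).const_add (x i)
  refine (((hℓ.hasDerivAt_iteratedDeriv hk _).comp β hline).mul_const (b i ^ k)).congr_deriv ?_
  ring

lemma convexOn_lineRisk (hℓ : ExpLike ℓ) : ConvexOn ℝ Set.univ (lineRisk ℓ x b 0) :=
  convexOn_of_hasDerivWithinAt2_nonneg convex_univ
    (fun α _ => (hℓ.hasDerivAt_lineRisk two_pos α).continuousAt.continuousWithinAt)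
    (fun α _ => (hℓ.hasDerivAt_lineRisk two_pos α).hasDerivWithinAt)
    (fun α _ => (hℓ.hasDerivAt_lineRisk one_lt_two α).hasDerivWithinAt)
    (fun _ _ => sum_nonneg fun i _ =>
      mul_nonneg (hℓ.iteratedDeriv_pos le_rfl _).le (sq_nonneg (b i)))

lemma add_mul_le_of_lineRisk_le (hℓ : ExpLike ℓ) {α : ℝ} (h : lineRisk ℓ x b 0 α ≤ ℓ z) (i : ι) :
    x i + α * b i ≤ z := by
  refine hℓ.strictMono.le_iff_le.1 (le_trans ?_ h)
  simpa [lineRisk] using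
    single_le_sum (f := fun i => ℓ (x i + α * b i)) (fun j _ => (hℓ.pos _).le) (mem_univ i)

lemma lineRisk_two_le (hℓ : ExpLike ℓ) (hC : CBound ℓ z C) (hb : ∀ i, |b i| ≤ 1) {α : ℝ}
    (h : lineRisk ℓ x b 0 α ≤ ℓ z) : lineRisk ℓ x b 2 α ≤ C ^ 2 * lineRisk ℓ x b 0 α := by
  simp only [lineRisk, mul_sum, pow_zero, mul_one]
  refine sum_le_sum fun i _ => ?_
  have hbi : b i ^ 2 ≤ 1 := (sq_le_one_iff_abs_le_one _).2 (hb i)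
  calc iteratedDeriv 2 ℓ (x i + α * b i) * b i ^ 2
      ≤ iteratedDeriv 2 ℓ (x i + α * b i) :=
        mul_le_of_le_one_right (hℓ.iteratedDeriv_pos le_rfl _).le hbi
    _ ≤ C ^ 2 * iteratedDeriv 0 ℓ (x i + α * b i) :=
        hC.iteratedDeriv_le_sq_mul_iteratedDeriv (hℓ.add_mul_le_of_lineRisk_le h i) le_rfl
          zero_le_two

lemma sum_le_sq_mul_sum_deriv (hℓ : ExpLike ℓ) (hC : CBound ℓ z C) (hz : ∑ i, ℓ (x i) ≤ ℓ z) :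
    ∑ i, ℓ (x i) ≤ C ^ 2 * ∑ i, deriv ℓ (x i) := by
  rw [mul_sum]
  refine sum_le_sum fun i _ => ?_
  have hxz : x i ≤ z := by
    simpa using hℓ.add_mul_le_of_lineRisk_le (b := 0) (lineRisk_zero_zero.trans_le hz) i
  simpa using hC.iteratedDeriv_le_sq_mul_iteratedDeriv hxz zero_le_two one_le_two

lemma lineRisk_le_quadratic (hℓ : ExpLike ℓ) (hC : CBound ℓ z C) (hb : ∀ i, |b i| ≤ 1)
    (hz : ∑ i, ℓ (x i) ≤ ℓ z) {q : ℝ} (hq : 0 ≤ q)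
    (hdecr : ∀ α ∈ Set.Icc 0 q, lineRisk ℓ x b 0 α ≤ ∑ i, ℓ (x i)) :
    lineRisk ℓ x b 0 q ≤
      ∑ i, ℓ (x i) + lineRisk ℓ x b 1 0 * q + C ^ 4 * (∑ i, deriv ℓ (x i)) * q ^ 2 / 2 := by
  have hsecond : ∀ α ∈ Set.Icc 0 q, lineRisk ℓ x b 2 α ≤ C ^ 4 * ∑ i, deriv ℓ (x i) :=
    fun α hα =>
      calc lineRisk ℓ x b 2 α ≤ C ^ 2 * lineRisk ℓ x b 0 α :=
            hℓ.lineRisk_two_le hC hb ((hdecr α hα).trans hz)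
        _ ≤ C ^ 2 * (C ^ 2 * ∑ i, deriv ℓ (x i)) :=
            mul_le_mul_of_nonneg_left
              ((hdecr α hα).trans (hℓ.sum_le_sq_mul_sum_deriv hC hz)) (sq_nonneg C)
        _ = C ^ 4 * ∑ i, deriv ℓ (x i) := by ring
  simpa only [sub_zero, lineRisk_zero_zero] using
    le_add_mul_add_sq_of_hasDerivAt2_le hq (fun α _ => hℓ.hasDerivAt_lineRisk two_pos α)
      (fun α _ => hℓ.hasDerivAt_lineRisk one_lt_two α) hsecond

lemma lineRisk_le_of_step (hℓ : ExpLike ℓ) (hC : CBound ℓ z C) (hb : ∀ i, |b i| ≤ 1)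
    (hz : ∑ i, ℓ (x i) ≤ ℓ z) {γ ν a s : ℝ} (hν : ν ∈ Set.Ioo (0 : ℝ) 2) (hγ : 0 ≤ γ)
    (hgrad : lineRisk ℓ x b 1 0 = -(γ * ∑ i, deriv ℓ (x i)))
    (hs : ∀ β, lineRisk ℓ x b 0 s ≤ lineRisk ℓ x b 0 β) (hqa : ν * (γ / C ^ 4) ≤ a)
    (has : a ≤ s) : lineRisk ℓ x b 0 a ≤ (∑ i, ℓ (x i)) * (1 - descentRate ν γ C) := by
  have hC0 := hC.const_pos
  have hν0 := hν.1
  set q := ν * (γ / C ^ 4) with hq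
  have hq0 : 0 ≤ q := by positivity
  have hqs : q ≤ s := hqa.trans has
  have hanti := antitoneOn_Iic_of_convexOn_of_forall_le (hℓ.convexOn_lineRisk (b := b)) hs
  have hdecr : ∀ α ∈ Set.Icc 0 q, lineRisk ℓ x b 0 α ≤ ∑ i, ℓ (x i) := fun α hα =>
    (hanti (hq0.trans hqs) (hα.2.trans hqs) hα.1).trans_eq lineRisk_zero_zero
  have hrate := mul_le_mul_of_nonneg_right (hℓ.sum_le_sq_mul_sum_deriv hC hz)
    (descentRate_nonneg (γ := γ) (C := C) hν)
  calc lineRisk ℓ x b 0 a ≤ lineRisk ℓ x b 0 q := hanti hqs has hqa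
    _ ≤ ∑ i, ℓ (x i) + lineRisk ℓ x b 1 0 * q + C ^ 4 * (∑ i, deriv ℓ (x i)) * q ^ 2 / 2 :=
        hℓ.lineRisk_le_quadratic hC hb hz hq0 hdecr
    _ = ∑ i, ℓ (x i) - C ^ 2 * (∑ i, deriv ℓ (x i)) * descentRate ν γ C := by
        rw [hgrad, hq, descentRate]
        field_simp
        ring
    _ ≤ (∑ i, ℓ (x i)) * (1 - descentRate ν γ C) := by linarith

end ExpLike

end LineRisk

section Risk

variable {ℓ : ℝ → ℝ} {A : Matrix (Fin m) (Fin n) ℝ}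

lemma LL_add_smul (lam v : Fin n → ℝ) (β : ℝ) :
    LL ℓ A (lam + β • v) = lineRisk ℓ (A.mulVec lam) (A.mulVec v) 0 β / m := by
  simp [LL, lineRisk, Matrix.mulVec_add, Matrix.mulVec_smul]

lemma LL_zero [NeZero m] : LL ℓ A 0 = ℓ 0 := by
  simp [LL, mul_div_cancel_left₀ (ℓ 0) (NeZero.ne (m : ℝ))]

lemma mul_LL [NeZero m] (lam : Fin n → ℝ) : m * LL ℓ A lam = ∑ i, ℓ (A.mulVec lam i) :=
  mul_div_cancel₀ _ (NeZero.ne (m : ℝ))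

lemma sum_deriv_mul_eq [NeZero m] (lam : Fin n → ℝ) (b : Fin m → ℝ) :
    ∑ i, deriv ℓ (A.mulVec lam i) * b i = m * ∑ i, gradL ℓ A lam i * b i := by
  rw [mul_sum]
  refine sum_congr rfl fun i _ => ?_
  rw [gradL, ← mul_assoc, mul_div_cancel₀ _ (NeZero.ne (m : ℝ))]

lemma abs_sum_gradL_mul_le_gInf (lam : Fin n → ℝ) (j : Fin n) :
    |∑ i, gradL ℓ A lam i * A i j| ≤ gInf ℓ A lam :=
  le_ciSup (f := fun j => |∑ i, gradL ℓ A lam i * A i j|) (Set.finite_range _).bddAbove j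

lemma gammaHat_nonneg (lam : Fin n → ℝ) : 0 ≤ gammaHat ℓ A lam :=
  div_nonneg (Real.iSup_nonneg fun _ => abs_nonneg _) (sum_nonneg fun _ _ => abs_nonneg _)

lemma mul_gammaHat_div_nonneg {ν : ℝ} (hν : 0 ≤ ν) (lam : Fin n → ℝ) :
    0 ≤ ν * (gammaHat ℓ A lam / Cstep ℓ A lam ^ 4) :=
  mul_nonneg hν (div_nonneg (gammaHat_nonneg lam) (Even.pow_nonneg (by decide) _))

lemma neg_sum_gradL_mul_mulVec_le (lam μ : Fin n → ℝ) :
    -∑ i, gradL ℓ A lam i * A.mulVec μ i ≤ gInf ℓ A lam * ∑ j, |μ j| := by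
  have hswap : ∑ i, gradL ℓ A lam i * A.mulVec μ i
      = ∑ j, (∑ i, gradL ℓ A lam i * A i j) * μ j :=
    Matrix.dotProduct_mulVec (gradL ℓ A lam) A μ
  rw [hswap, ← sum_neg_distrib, mul_sum]
  refine sum_le_sum fun j _ => (neg_le_abs _).trans ?_
  rw [abs_mul]
  exact mul_le_mul_of_nonneg_right (abs_sum_gradL_mul_le_gInf lam j) (abs_nonneg _)

namespace ExpLike

lemma LL_nonneg (hℓ : ExpLike ℓ) (lam : Fin n → ℝ) : 0 ≤ LL ℓ A lam :=
  div_nonneg (sum_nonneg fun _ _ => (hℓ.pos _).le) m.cast_nonneg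

variable [NeZero m]

lemma gradL_pos (hℓ : ExpLike ℓ) (lam : Fin n → ℝ) (i : Fin m) : 0 < gradL ℓ A lam i :=
  div_pos (hℓ.deriv_pos _) (Nat.cast_pos.2 (NeZero.pos m))

lemma gOne_eq_sum_gradL (hℓ : ExpLike ℓ) (lam : Fin n → ℝ) :
    gOne ℓ A lam = ∑ i, gradL ℓ A lam i :=
  sum_congr rfl fun i _ => abs_of_pos (hℓ.gradL_pos lam i)

lemma gOne_pos (hℓ : ExpLike ℓ) (lam : Fin n → ℝ) : 0 < gOne ℓ A lam := by
  rw [hℓ.gOne_eq_sum_gradL]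
  exact sum_pos (fun i _ => hℓ.gradL_pos lam i) univ_nonempty

lemma gammaMax_le_gammaHat (hℓ : ExpLike ℓ) (lam : Fin n → ℝ) :
    gammaMax A ≤ gammaHat ℓ A lam := by
  refine Real.sSup_le ?_ (gammaHat_nonneg lam)
  rintro _ ⟨μ, hμ, rfl⟩
  rw [gammaHat, le_div_iff₀ (hℓ.gOne_pos lam), hℓ.gOne_eq_sum_gradL, mul_sum]
  calc ∑ i, (⨅ i, -(A.mulVec μ i)) * gradL ℓ A lam i
      ≤ ∑ i, -(A.mulVec μ i) * gradL ℓ A lam i :=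
        sum_le_sum fun i _ => mul_le_mul_of_nonneg_right
          (ciInf_le (f := fun i => -(A.mulVec μ i)) (Set.finite_range _).bddBelow i)
          (hℓ.gradL_pos lam i).le
    _ = -∑ i, gradL ℓ A lam i * A.mulVec μ i := by
        simp only [neg_mul, sum_neg_distrib, mul_comm (gradL ℓ A lam _)]
    _ ≤ gInf ℓ A lam * ∑ j, |μ j| := neg_sum_gradL_mul_mulVec_le lam μ
    _ = gInf ℓ A lam := by rw [hμ, mul_one]

lemma apply_invFun_mul_LL (hℓ : ExpLike ℓ) (lam : Fin n → ℝ) :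
    ℓ (Function.invFun ℓ (m * LL ℓ A lam)) = m * LL ℓ A lam := by
  refine hℓ.apply_invFun ?_
  rw [mul_LL]
  exact sum_pos (fun _ _ => hℓ.pos _) univ_nonempty

lemma Cstep_le_Cstep (hℓ : ExpLike ℓ) {lam μ : Fin n → ℝ} (h : LL ℓ A lam ≤ LL ℓ A μ) :
    Cstep ℓ A lam ≤ Cstep ℓ A μ := by
  refine Cconst_le_Cconst (hℓ _) (hℓ.strictMono.le_iff_le.1 ?_)
  rw [hℓ.apply_invFun_mul_LL, hℓ.apply_invFun_mul_LL]
  exact mul_le_mul_of_nonneg_left h m.cast_nonneg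

lemma LL_add_smul_le_of_step (hℓ : ExpLike ℓ) {lam v : Fin n → ℝ} {ν a s : ℝ}
    (hν : ν ∈ Set.Ioo (0 : ℝ) 2) (hv : ∀ i, |A.mulVec v i| ≤ 1)
    (hgrad : ∑ i, gradL ℓ A lam i * A.mulVec v i = -gInf ℓ A lam)
    (hs : ∀ β : ℝ, LL ℓ A (lam + s • v) ≤ LL ℓ A (lam + β • v))
    (hqa : ν * (gammaHat ℓ A lam / Cstep ℓ A lam ^ 4) ≤ a) (has : a ≤ s) :
    LL ℓ A (lam + a • v) ≤
      LL ℓ A lam * (1 - descentRate ν (gammaHat ℓ A lam) (Cstep ℓ A lam)) := by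
  have hm : (0 : ℝ) < m := Nat.cast_pos.2 (NeZero.pos m)
  have hlevel : ∑ i, ℓ (A.mulVec lam i) ≤ ℓ (Function.invFun ℓ (m * LL ℓ A lam)) := by
    rw [hℓ.apply_invFun_mul_LL, mul_LL]
  have hslope : lineRisk ℓ (A.mulVec lam) (A.mulVec v) 1 0
      = -(gammaHat ℓ A lam * ∑ i, deriv ℓ (A.mulVec lam i)) := by
    have hsum : ∑ i, deriv ℓ (A.mulVec lam i) = m * gOne ℓ A lam := by
      simpa [hℓ.gOne_eq_sum_gradL] using sum_deriv_mul_eq (ℓ := ℓ) (A := A) lam 1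
    rw [lineRisk_one_zero, sum_deriv_mul_eq, hgrad, hsum, mul_left_comm, gammaHat,
      div_mul_cancel₀ _ (hℓ.gOne_pos lam).ne', mul_neg]
  have hmin : ∀ β, lineRisk ℓ (A.mulVec lam) (A.mulVec v) 0 s ≤
      lineRisk ℓ (A.mulVec lam) (A.mulVec v) 0 β := fun β => by
    simpa only [LL_add_smul, div_le_div_iff_of_pos_right hm] using hs β
  rw [LL_add_smul, div_le_iff₀' hm, ← mul_assoc, mul_LL]
  exact hℓ.lineRisk_le_of_step (cBound_Cconst (hℓ _)) hv hlevel hν (gammaHat_nonneg lam) hslope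
    hmin hqa has

end ExpLike

end Risk

section Boosting

variable {ℓ : ℝ → ℝ} {A : Matrix (Fin m) (Fin n) ℝ} {lam v : ℕ → Fin n → ℝ} {α αstar : ℕ → ℝ}
  {ν : ℝ}

lemma IsBoostSeq.abs_mulVec_le_one (hseq : IsBoostSeq ℓ A lam α v) (hA : ∀ i j, |A i j| ≤ 1)
    {t : ℕ} (ht : 1 ≤ t) (i : Fin m) : |A.mulVec (v t) i| ≤ 1 := by
  obtain ⟨s, hs, j, hv⟩ := hseq.2.2.1 t ht
  have hs1 : |s| = 1 := by rcases hs with rfl | rfl <;> simp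
  simpa [hv, Matrix.mulVec_smul, abs_mul, hs1] using hA i j

lemma IsBoostSeq.LL_succ_le [NeZero m] (hseq : IsBoostSeq ℓ A lam α v) (hA : ∀ i j, |A i j| ≤ 1)
    (hℓ : ExpLike ℓ) (hν : ν ∈ Set.Ioo (0 : ℝ) 2)
    (hαstar : ∀ i : ℕ, 1 ≤ i → ∀ β : ℝ,
      LL ℓ A (lam (i - 1) + αstar i • v i) ≤ LL ℓ A (lam (i - 1) + β • v i))
    (hstep : ∀ i : ℕ, 1 ≤ i →
      ν * (gammaHat ℓ A (lam (i - 1)) / Cstep ℓ A (lam (i - 1)) ^ 4) ≤ α i ∧ α i ≤ αstar i)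
    (t : ℕ) :
    LL ℓ A (lam (t + 1)) ≤
      LL ℓ A (lam t) * (1 - descentRate ν (gammaHat ℓ A (lam t)) (Cstep ℓ A (lam t))) := by
  have ht : 1 ≤ t + 1 := t.succ_pos
  rw [hseq.2.1 (t + 1) ht]
  exact hℓ.LL_add_smul_le_of_step hν (hseq.abs_mulVec_le_one hA ht) (hseq.2.2.2 (t + 1) ht)
    (hαstar (t + 1) ht) (hstep (t + 1) ht).1 (hstep (t + 1) ht).2

lemma ExpLike.LL_le_mul_exp [NeZero m] (hℓ : ExpLike ℓ) (hν : ν ∈ Set.Ioo (0 : ℝ) 2)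
    (hγ : 0 ≤ gammaMax A)
    (hdescent : ∀ t, LL ℓ A (lam (t + 1)) ≤
      LL ℓ A (lam t) * (1 - descentRate ν (gammaHat ℓ A (lam t)) (Cstep ℓ A (lam t))))
    (t : ℕ) :
    LL ℓ A (lam t) ≤
      LL ℓ A (lam 0) * exp (-(t * descentRate ν (gammaMax A) (Cstep ℓ A (lam 0)))) := by
  have hanti : Antitone fun t => LL ℓ A (lam t) := antitone_nat_of_succ_le fun t =>
    (hdescent t).trans
      (mul_le_of_le_one_right (hℓ.LL_nonneg _) (sub_le_self _ (descentRate_nonneg hν)))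
  refine le_mul_exp_of_forall_succ_le_mul_one_sub (u := fun t => LL ℓ A (lam t))
    (fun t => hℓ.LL_nonneg _)
    (fun t => (hdescent t).trans (mul_le_mul_of_nonneg_left (sub_le_sub_left ?_ _)
      (hℓ.LL_nonneg _))) t
  exact descentRate_le_descentRate hν hγ (hℓ.gammaMax_le_gammaHat _)
    (cBound_Cconst (hℓ _)).const_pos (hℓ.Cstep_le_Cstep (hanti t.zero_le))

end Boosting

theorem risk_conv_separable_general {m n : ℕ} (hm : 0 < m)
    (A : Matrix (Fin m) (Fin n) ℝ) (hA : ∀ i j, |A i j| ≤ 1)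
    (ℓ : ℝ → ℝ) (hℓ : ExpLike ℓ)
    (ν : ℝ) (hν : ν ∈ Set.Ioo (0 : ℝ) 2)
    (hγ : 0 < gammaMax A)
    (lam : ℕ → Fin n → ℝ) (α : ℕ → ℝ) (v : ℕ → Fin n → ℝ)
    (hseq : IsBoostSeq ℓ A lam α v)
    (αstar : ℕ → ℝ)
    (hαstar : ∀ i : ℕ, 1 ≤ i → ∀ β : ℝ,
      LL ℓ A (lam (i - 1) + αstar i • v i) ≤ LL ℓ A (lam (i - 1) + β • v i))
    (hstep : ∀ i : ℕ, 1 ≤ i →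
      ν * (gammaHat ℓ A (lam (i - 1)) / Cstep ℓ A (lam (i - 1)) ^ 4) ≤ α i ∧ α i ≤ αstar i) :
    (∀ i : ℕ, 1 ≤ i → gammaMax A ≤ gammaHat ℓ A (lam (i - 1))) ∧
    (∀ t : ℕ, LL ℓ A (lam t) ≤
      ℓ 0 * exp (-(t : ℝ) * ν * (2 - ν) * gammaMax A ^ 2 / (2 * Cstep ℓ A (lam 0) ^ 6))) ∧
    (∀ ε : ℝ, 0 < ε → ∀ t : ℕ,
      2 * Cstep ℓ A (lam 0) ^ 6 / (ν * (2 - ν) * gammaMax A ^ 2) * log (ℓ 0 / ε) ≤ (t : ℝ) →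
      LL ℓ A (lam t) ≤ ε) := by
  have : NeZero m := ⟨hm.ne'⟩
  set κ := descentRate ν (gammaMax A) (Cstep ℓ A (lam 0)) with hκ
  have hdecay (t : ℕ) : LL ℓ A (lam t) ≤ ℓ 0 * exp (-(t * κ)) := by
    have hrisk0 : LL ℓ A (lam 0) = ℓ 0 := by rw [hseq.1, LL_zero]
    exact hrisk0 ▸ hℓ.LL_le_mul_exp hν hγ.le (hseq.LL_succ_le hA hℓ hν hαstar hstep) t
  refine ⟨fun i _ => hℓ.gammaMax_le_gammaHat _, fun t => ?_, fun ε hε t ht => ?_⟩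
  · convert hdecay t using 3
    rw [hκ, descentRate]
    ring
  · have hκ_pos : 0 < κ := descentRate_pos hν hγ (cBound_Cconst (hℓ _)).const_pos
    rw [← inv_div, ← descentRate, inv_mul_le_iff₀ hκ_pos, mul_comm] at ht
    exact (hdecay t).trans (mul_exp_neg_le_of_log_div_le (hℓ.pos 0) hε ht)

/-- under separability (`γ > 0`) and steps between the quadratic-upper-bound
step and the shrunk optimal step: `γ_i ≥ γ`, geometric decrease of the risk, and
`O((1/γ²)·ln(1/ε))` iterations suffice to reach risk `ε`. -/
theorem risk_conv_separable {m n : ℕ} (hm : 0 < m) (hn : 0 < n)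
    (A : Matrix (Fin m) (Fin n) ℝ) (hA : ∀ i j, |A i j| ≤ 1)
    (ℓ : ℝ → ℝ) (hℓ : MemL ℓ)
    (ν : ℝ) (hν : ν ∈ Set.Ioc (0:ℝ) 1)
    (hγ : 0 < gammaMax A)
    (lam : ℕ → Fin n → ℝ) (α : ℕ → ℝ) (v : ℕ → Fin n → ℝ)
    (hseq : IsBoostSeq ℓ A lam α v)
    (αstar : ℕ → ℝ)
    (hαstar : ∀ i : ℕ, 1 ≤ i → ∀ β : ℝ,
      LL ℓ A (lam (i-1) + αstar i • v i) ≤ LL ℓ A (lam (i-1) + β • v i))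
    (hstep : ∀ i : ℕ, 1 ≤ i →
      ν * (gammaHat ℓ A (lam (i-1)) / (Cstep ℓ A (lam (i-1)))^4) ≤ α i ∧
      α i ≤ ν * αstar i) :
    (∀ i : ℕ, 1 ≤ i → gammaMax A ≤ gammaHat ℓ A (lam (i-1))) ∧
    (∀ t : ℕ, LL ℓ A (lam t) ≤
      ℓ 0 * Real.exp (-(t:ℝ) * ν * (2-ν) * (gammaMax A)^2 / (2 * (Cstep ℓ A (lam 0))^6))) ∧
    (∀ ε : ℝ, 0 < ε → ε < ℓ 0 → ∀ t : ℕ,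
      (2 * (Cstep ℓ A (lam 0))^6 / (ν * (2-ν) * (gammaMax A)^2)) * Real.log (ℓ 0 / ε) ≤ (t:ℝ) →
      LL ℓ A (lam t) ≤ ε) := by
  have h := risk_conv_separable_general hm A hA ℓ hℓ.expLike ν
    ⟨hν.1, hν.2.trans_lt one_lt_two⟩ hγ lam α v hseq αstar hαstar fun i hi =>
      ⟨(hstep i hi).1, le_of_le_mul_of_le_one hν
        ((mul_gammaHat_div_nonneg hν.1.le _).trans (hstep i hi).1) (hstep i hi).2⟩
  exact ⟨h.1, h.2.1, fun ε hε _ => h.2.2 ε hε⟩
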